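/- Let G ≤ PL₊(I) and let H be a subgroup of the split group S(G) with G ≤ H ≤ S(G). If H admits a bad overlap, then G also admits a bad overlap and G is not soluble. -/

import Mathlib

open Set

namespace PLPaper

/-- We model `PL₊(I)` inside the group of bijections of `ℝ` with *opposite*
composition, so that the group acts on `ℝ` on the right:
`x · (g * h) = (x · g) · h`. -/
abbrev PermR : Type := (Equiv.Perm ℝ)ᵐᵒᵖ

/-- The (right) action of `g` on the point `x`. -/
def ap (g : PermR) (x : ℝ) : ℝ := g.unop x

/-- `g` is affine on a neighbourhood of `x`. -/
def IsLocallyAffineAt (g : PermR) (x : ℝ) : Prop :=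
  ∃ m b : ℝ, ∀ᶠ y in nhds x, ap g y = m * y + b

/-- The breakpoints of `g`: points of `(0,1)` where `g` is not locally affine
(equivalently, for a PL map, where the derivative fails to exist). -/
def Breakpoints (g : PermR) : Set ℝ :=
  {x ∈ Ioo (0:ℝ) 1 | ¬ IsLocallyAffineAt g x}

/-- `g` is an orientation-preserving piecewise-linear homeomorphism of `[0,1]`
(extended by the identity to all of `ℝ`), with finitely many breakpoints. -/
def IsPL (g : PermR) : Prop :=
  StrictMono (ap g) ∧ (∀ x ∉ Ioo (0:ℝ) 1, ap g x = x) ∧ (Breakpoints g).Finite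

/-- The support of `g`. -/
def Supp (g : PermR) : Set ℝ := {x | ap g x ≠ x}

/-- `(a,b)` is an orbital of `g`, i.e. a connected component of `Supp g`. -/
def IsOrbital (g : PermR) (a b : ℝ) : Prop :=
  a < b ∧ Ioo a b ⊆ Supp g ∧ a ∉ Supp g ∧ b ∉ Supp g

/-- The support of a subgroup `G`. -/
def GSupp (G : Subgroup PermR) : Set ℝ := ⋃ g ∈ (G : Set PermR), Supp g

/-- `(a,b)` is an orbital of the group `G`, i.e. a connected component of its support. -/
def IsGroupOrbital (G : Subgroup PermR) (a b : ℝ) : Prop :=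
  a < b ∧ Ioo a b ⊆ GSupp G ∧ a ∉ GSupp G ∧ b ∉ GSupp G

/-- The pair `g, h` carries a transition chain: orbitals `(a,b)` of `g` and
`(c,d)` of `h` with `a < c < b < d`. -/
def ElemsTransitionChain (g h : PermR) : Prop :=
  ∃ a b c d : ℝ, IsOrbital g a b ∧ IsOrbital h c d ∧ a < c ∧ c < b ∧ b < d

/-- The pair `g, h` carries a one-sided overlap: orbitals `(a,b)` of `g` and
`(a,c)` of `h`, or `(a,b)` of `g` and `(c,b)` of `h`, where `a < c < b`. -/
def ElemsOneSidedOverlap (g h : PermR) : Prop :=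
  ∃ a b c : ℝ, a < c ∧ c < b ∧
    ((IsOrbital g a b ∧ IsOrbital h a c) ∨ (IsOrbital g a b ∧ IsOrbital h c b))

def AdmitsTransitionChain (G : Subgroup PermR) : Prop :=
  ∃ g ∈ G, ∃ h ∈ G, ElemsTransitionChain g h

def AdmitsOneSidedOverlap (G : Subgroup PermR) : Prop :=
  ∃ g ∈ G, ∃ h ∈ G, ElemsOneSidedOverlap g h

/-- `G` admits a bad overlap: orbitals `A` of `f ∈ G` and `B` of `g ∈ G` which
intersect, are distinct, and neither closure is contained in the other orbital. -/
def AdmitsBadOverlap (G : Subgroup PermR) : Prop :=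
  ∃ f ∈ G, ∃ g ∈ G, ∃ a b c d : ℝ, IsOrbital f a b ∧ IsOrbital g c d ∧
    (Ioo a b ∩ Ioo c d).Nonempty ∧ Ioo a b ≠ Ioo c d ∧
    ¬ Icc a b ⊆ Ioo c d ∧ ¬ Icc c d ⊆ Ioo a b

/-- A tower: a set of signed orbitals `((a,b), g)` with pairwise nested orbitals,
where equal orbitals force equal signatures. -/
def IsTower (T : Set ((ℝ × ℝ) × PermR)) : Prop :=
  (∀ p ∈ T, IsOrbital p.2 p.1.1 p.1.2) ∧
  (∀ p ∈ T, ∀ q ∈ T,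
      Ioo p.1.1 p.1.2 ⊆ Ioo q.1.1 q.1.2 ∨ Ioo q.1.1 q.1.2 ⊆ Ioo p.1.1 p.1.2) ∧
  (∀ p ∈ T, ∀ q ∈ T, p.1 = q.1 → p.2 = q.2)

/-- `G` admits the tower `T` if `T` is a tower all of whose signatures lie in `G`. -/
def AdmitsTower (G : Subgroup PermR) (T : Set ((ℝ × ℝ) × PermR)) : Prop :=
  IsTower T ∧ ∀ p ∈ T, p.2 ∈ G

def AdmitsInfiniteTower (G : Subgroup PermR) : Prop :=
  ∃ T : Set ((ℝ × ℝ) × PermR), AdmitsTower G T ∧ T.Infinite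

/-- The set of breakpoints of the elements of a set `S`. -/
def BreakSet (S : Set PermR) : Set ℝ := ⋃ g ∈ S, Breakpoints g

/-- The derived length of a group: the least `n` with `derivedSeries G n = ⊥`. -/
noncomputable def derivedLength (G : Type*) [Group G] : ℕ :=
  sInf {n : ℕ | derivedSeries G n = ⊥}

/-- `g` is the one-bump factor of `f` over the orbital `(a,b)` of `f`:
`g` agrees with `f` on `(a,b)` and is the identity elsewhere. -/
def IsOneBumpFactor (g f : PermR) (a b : ℝ) : Prop :=
  IsOrbital f a b ∧ (∀ x ∈ Ioo a b, ap g x = ap f x) ∧ (∀ x ∉ Ioo a b, ap g x = x)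

/-- `g` is a one-bump factor of `f`. -/
def IsFactorOf (g f : PermR) : Prop := ∃ a b : ℝ, IsOneBumpFactor g f a b

/-- `((a,b), g)` is a factor signed orbital associated to (an element of) `G`. -/
def AssociatedFactor (G : Subgroup PermR) (a b : ℝ) (g : PermR) : Prop :=
  ∃ f ∈ G, IsOneBumpFactor g f a b

/-- The split group `S(G)`: the subgroup generated by the one-bump factors of
all elements of `G`. -/
def SplitGroup (G : Subgroup PermR) : Subgroup PermR :=
  Subgroup.closure {g : PermR | ∃ f ∈ G, IsFactorOf g f}

/-! ### Basic facts about the action -/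

theorem ap_mul (g h : PermR) (x : ℝ) : ap (g * h) x = ap h (ap g x) := rfl

theorem ap_one (x : ℝ) : ap 1 x = x := rfl

theorem ap_inv_ap (g : PermR) (x : ℝ) : ap g⁻¹ (ap g x) = x := by
  rw [← ap_mul, mul_inv_cancel, ap_one]

theorem ap_ap_inv (g : PermR) (x : ℝ) : ap g (ap g⁻¹ x) = x := by
  rw [← ap_mul, inv_mul_cancel, ap_one]

theorem ap_inj (g : PermR) {x y : ℝ} (h : ap g x = ap g y) : x = y := by
  rw [← ap_inv_ap g x, h, ap_inv_ap]

theorem ap_inv_fix (g : PermR) {x : ℝ} (h : ap g x = x) : ap g⁻¹ x = x := by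
  apply ap_inj g
  rw [ap_ap_inv, h]

theorem mono_inv {g : PermR} (hg : StrictMono (ap g)) : StrictMono (ap g⁻¹) := by
  intro x y hxy
  by_contra hc
  have := hg.monotone (not_lt.mp hc)
  rw [ap_ap_inv, ap_ap_inv] at this
  linarith

theorem cont_of_mono {g : PermR} (hg : StrictMono (ap g)) : Continuous (ap g) :=
  hg.monotone.continuous_of_surjective (fun y => ⟨ap g⁻¹ y, ap_ap_inv g y⟩)

theorem isClosed_fix {g : PermR} (hg : StrictMono (ap g)) : IsClosed {x | ap g x = x} :=
  isClosed_eq (cont_of_mono hg) continuous_id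

theorem not_supp {g : PermR} {x : ℝ} : x ∉ Supp g ↔ ap g x = x := by
  simp [Supp]

/-- Component of the complement of a closed set containing `0`, `1`. -/
theorem exists_component (F : Set ℝ) (hF : IsClosed F) (h0 : (0:ℝ) ∈ F) (h1 : (1:ℝ) ∈ F)
    {u v : ℝ} (hu : 0 ≤ u) (hv : v ≤ 1) (huv : u ≤ v) (hn : ∀ x ∈ Icc u v, x ∉ F) :
    ∃ a b, 0 ≤ a ∧ b ≤ 1 ∧ a < u ∧ v < b ∧ a ∈ F ∧ b ∈ F ∧ ∀ x ∈ Ioo a b, x ∉ F := by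
  have hne1 : (F ∩ Iic u).Nonempty := ⟨0, h0, hu⟩
  have hbd1 : BddAbove (F ∩ Iic u) := ⟨u, fun x hx => hx.2⟩
  have hne2 : (F ∩ Ici v).Nonempty := ⟨1, h1, hv⟩
  have hbd2 : BddBelow (F ∩ Ici v) := ⟨v, fun x hx => hx.2⟩
  have m1 := (hF.inter isClosed_Iic).csSup_mem hne1 hbd1
  have m2 := (hF.inter isClosed_Ici).csInf_mem hne2 hbd2
  have l1 : sSup (F ∩ Iic u) ≠ u := by
    intro h; rw [h] at m1; exact hn u ⟨le_refl _, huv⟩ m1.1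
  have l2 : sInf (F ∩ Ici v) ≠ v := by
    intro h; rw [h] at m2; exact hn v ⟨huv, le_refl _⟩ m2.1
  refine ⟨_, _, le_csSup hbd1 ⟨h0, hu⟩, csInf_le hbd2 ⟨h1, hv⟩, lt_of_le_of_ne m1.2 l1,
    lt_of_le_of_ne m2.2 (Ne.symm l2), m1.1, m2.1, ?_⟩
  rintro x ⟨hx1, hx2⟩ hxF
  rcases le_total x u with h | h
  · exact absurd (le_csSup hbd1 ⟨hxF, h⟩) (not_le.mpr hx1)
  rcases le_total x v with h' | h'
  · exact hn x ⟨h, h'⟩ hxF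
  · exact absurd (csInf_le hbd2 ⟨hxF, h'⟩) (not_le.mpr hx2)

theorem IsPL.fix0 {g : PermR} (hg : IsPL g) : ap g 0 = 0 := hg.2.1 0 (by simp)

theorem IsPL.fix1 {g : PermR} (hg : IsPL g) : ap g 1 = 1 := hg.2.1 1 (by simp)

theorem IsPL.mem_of_moved {g : PermR} (hg : IsPL g) {x : ℝ} (h : ap g x ≠ x) :
    x ∈ Ioo (0:ℝ) 1 := by
  by_contra hc; exact h (hg.2.1 x hc)

theorem exists_orbital {g : PermR} (hg : IsPL g) {x : ℝ} (h : ap g x ≠ x) :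
    ∃ a b, IsOrbital g a b ∧ x ∈ Ioo a b := by
  have hx := hg.mem_of_moved h
  obtain ⟨a, b, -, -, h1, h2, h3, h4, h5⟩ := exists_component _ (isClosed_fix hg.1) hg.fix0 hg.fix1
    hx.1.le hx.2.le (le_refl x) (by
      rintro y ⟨hy1, hy2⟩; have := le_antisymm hy2 hy1; subst this; exact h)
  exact ⟨a, b, ⟨by linarith, fun y hy => h5 y hy, not_supp.2 h3, not_supp.2 h4⟩, h1, h2⟩

theorem IsOrbital.left {g : PermR} {a b : ℝ} (h : IsOrbital g a b) : ap g a = a :=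
  not_supp.1 h.2.2.1

theorem IsOrbital.right {g : PermR} {a b : ℝ} (h : IsOrbital g a b) : ap g b = b :=
  not_supp.1 h.2.2.2

theorem IsOrbital.moved {g : PermR} {a b x : ℝ} (h : IsOrbital g a b) (hx : x ∈ Ioo a b) :
    ap g x ≠ x := h.2.1 hx

theorem image_Ioo {g : PermR} (hg : StrictMono (ap g)) (a b : ℝ) :
    ap g '' Ioo a b = Ioo (ap g a) (ap g b) := by
  ext y
  constructor
  · rintro ⟨x, hx, rfl⟩; exact ⟨hg hx.1, hg hx.2⟩
  · rintro ⟨h1, h2⟩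
    refine ⟨ap g⁻¹ y, ⟨?_, ?_⟩, ap_ap_inv g y⟩
    · have := mono_inv hg h1; rwa [ap_inv_ap] at this
    · have := mono_inv hg h2; rwa [ap_inv_ap] at this

theorem Ioo_inj {a b c d : ℝ} (h : a < b) (he : Ioo a b = Ioo c d) : a = c ∧ b = d := by
  have hcd : c < d := by
    rw [← nonempty_Ioo, ← he, nonempty_Ioo]; exact h
  have h1 := congrArg sInf he
  have h2 := congrArg sSup he
  rw [csInf_Ioo h, csInf_Ioo hcd] at h1
  rw [csSup_Ioo h, csSup_Ioo hcd] at h2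
  exact ⟨h1, h2⟩

/-! ### The split group has no new orbitals when there is no bad overlap -/

/-- The set of all orbitals of elements of `G`. -/
def Orb (G : Subgroup PermR) : Set (Set ℝ) :=
  {s | ∃ g ∈ G, ∃ a b, IsOrbital g a b ∧ s = Ioo a b}

section split

variable {G : Subgroup PermR}

theorem orb_cases (hN : ¬ AdmitsBadOverlap G) {f g : PermR} (hf : f ∈ G) (hg : g ∈ G)
    {a b c d : ℝ} (h1 : IsOrbital f a b) (h2 : IsOrbital g c d)
    (hne : (Ioo a b ∩ Ioo c d).Nonempty) :
    (a = c ∧ b = d) ∨ (c < a ∧ b < d) ∨ (a < c ∧ d < b) := by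
  by_contra hc
  push Not at hc
  obtain ⟨hc1, hc2, hc3⟩ := hc
  refine hN ⟨f, hf, g, hg, a, b, c, d, h1, h2, hne, ?_, ?_, ?_⟩
  · intro he
    obtain ⟨e1, e2⟩ := Ioo_inj h1.1 he
    exact hc1 e1 e2
  · intro hs
    exact absurd (hs (right_mem_Icc.2 h1.1.le)).2 (not_lt.2 (hc2 (hs (left_mem_Icc.2 h1.1.le)).1))
  · intro hs
    exact absurd (hs (right_mem_Icc.2 h2.1.le)).2 (not_lt.2 (hc3 (hs (left_mem_Icc.2 h2.1.le)).1))

theorem orb_nested (hN : ¬ AdmitsBadOverlap G) {A B : Set ℝ} (hA : A ∈ Orb G) (hB : B ∈ Orb G)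
    (hne : (A ∩ B).Nonempty) : A ⊆ B ∨ B ⊆ A := by
  obtain ⟨f, hf, a, b, h1, rfl⟩ := hA
  obtain ⟨g, hg, c, d, h2, rfl⟩ := hB
  rcases orb_cases hN hf hg h1 h2 hne with h | h | h
  · left; rw [h.1, h.2]
  · left; exact Ioo_subset_Ioo h.1.le h.2.le
  · right; exact Ioo_subset_Ioo h.1.le h.2.le

theorem conj_orbital {f g : PermR} (hg : StrictMono (ap g)) {a b : ℝ} (h : IsOrbital f a b) :
    IsOrbital (g⁻¹ * f * g) (ap g a) (ap g b) := by
  refine ⟨hg h.1, ?_, ?_, ?_⟩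
  · intro y hy
    rw [← image_Ioo hg] at hy
    obtain ⟨x, hx, rfl⟩ := hy
    intro he
    rw [ap_mul, ap_mul, ap_inv_ap] at he
    exact h.moved hx (ap_inj g he)
  · rw [not_supp, ap_mul, ap_mul, ap_inv_ap, h.left]
  · rw [not_supp, ap_mul, ap_mul, ap_inv_ap, h.right]

theorem orb_image (hPL : ∀ g ∈ G, IsPL g) {A : Set ℝ} (hA : A ∈ Orb G) {g : PermR} (hg : g ∈ G) :
    ap g '' A ∈ Orb G := by
  obtain ⟨f, hf, a, b, h1, rfl⟩ := hA
  exact ⟨_, mul_mem (mul_mem (inv_mem hg) hf) hg, _, _, conj_orbital (hPL g hg).1 h1,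
    image_Ioo (hPL g hg).1 a b⟩

/-- If an orbital meets its image under an element of `G`, its endpoints are fixed. -/
theorem orb_fix_ends (hPL : ∀ g ∈ G, IsPL g) (hN : ¬ AdmitsBadOverlap G) {f g : PermR}
    (hf : f ∈ G) (hg : g ∈ G) {a b : ℝ} (h : IsOrbital f a b)
    (hne : (ap g '' Ioo a b ∩ Ioo a b).Nonempty) : ap g a = a ∧ ap g b = b := by
  have hgm := (hPL g hg).1
  rw [image_Ioo hgm] at hne
  by_contra hcon
  have key : ap g a ≠ a ∧ ∃ z ∈ Ioo a b, ap g z = z := by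
    have hcont : ContinuousOn (fun x => ap g x - x) (Icc a b) :=
      ((cont_of_mono hgm).sub continuous_id).continuousOn
    rcases orb_cases hN (mul_mem (mul_mem (inv_mem hg) hf) hg) hf (conj_orbital hgm h) h hne with
      h' | h' | h'
    · exact absurd h' hcon
    · refine ⟨ne_of_gt h'.1, ?_⟩
      obtain ⟨z, hz, hz2⟩ := intermediate_value_Ioo' h.1.le hcont
        (show (0:ℝ) ∈ _ from ⟨by linarith [h'.2], by linarith [h'.1]⟩)
      exact ⟨z, hz, sub_eq_zero.1 hz2⟩
    · refine ⟨ne_of_lt h'.1, ?_⟩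
      obtain ⟨z, hz, hz2⟩ := intermediate_value_Ioo h.1.le hcont
        (show (0:ℝ) ∈ _ from ⟨by linarith [h'.1], by linarith [h'.2]⟩)
      exact ⟨z, hz, sub_eq_zero.1 hz2⟩
  obtain ⟨hga, z, hz, hgz⟩ := key
  obtain ⟨l, e, hle, hal⟩ := exists_orbital (hPL g hg) hga
  have hez : e ≤ z := by
    by_contra! hlt
    exact hle.moved ⟨hal.1.trans hz.1, hlt⟩ hgz
  obtain ⟨w, hw1, hw2⟩ := exists_between hal.2
  rcases orb_cases hN hg hf hle h ⟨w, ⟨hal.1.trans hw1, hw2⟩, ⟨hw1, by linarith [hz.2]⟩⟩ with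
    h' | h' | h'
  · linarith [hal.1, h'.1]
  · linarith [hal.1, h'.1]
  · linarith [hz.2, h'.2]

theorem orb_image_eq (hPL : ∀ g ∈ G, IsPL g) (hN : ¬ AdmitsBadOverlap G) {A : Set ℝ}
    (hA : A ∈ Orb G) {g : PermR} (hg : g ∈ G) (hne : (ap g '' A ∩ A).Nonempty) :
    ap g '' A = A := by
  obtain ⟨f, hf, a, b, h1, rfl⟩ := hA
  obtain ⟨e1, e2⟩ := orb_fix_ends hPL hN hf hg h1 hne
  rw [image_Ioo (hPL g hg).1, e1, e2]

/-- A proper sub-orbital of an orbital of `g` is displaced by `g`. -/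
theorem orb_displaced (hPL : ∀ g ∈ G, IsPL g) (hN : ¬ AdmitsBadOverlap G) {B : Set ℝ}
    (hB : B ∈ Orb G) {g : PermR} (hg : g ∈ G) {l e : ℝ} (hC : IsOrbital g l e)
    (hBC : B ⊆ Ioo l e) (hne : B ≠ Ioo l e) : ¬ (ap g '' B ∩ B).Nonempty := by
  intro hn
  obtain ⟨f, hf, a, b, h1, rfl⟩ := hB
  obtain ⟨e1, e2⟩ := orb_fix_ends hPL hN hf hg h1 hn
  obtain ⟨hla, hbe⟩ := (Ioo_subset_Ioo_iff h1.1).1 hBC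
  rcases eq_or_lt_of_le hla with h | h
  · rcases eq_or_lt_of_le hbe with h' | h'
    · exact hne (by rw [h, h'])
    · exact hC.moved ⟨by linarith [h1.1], h'⟩ e2
  · exact hC.moved ⟨h, by linarith [h1.1]⟩ e1

/-- `J` is compatible with the laminar family of orbitals. -/
def Compat (G : Subgroup PermR) (J : Set ℝ) : Prop :=
  ∀ C ∈ Orb G, (C ∩ J).Nonempty → C ⊆ J ∨ J ⊆ C

/-- `x`, `y` coincide or lie in a common orbital properly contained in `J`. -/
def Rel (G : Subgroup PermR) (J : Set ℝ) (x y : ℝ) : Prop :=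
  x = y ∨ ∃ C ∈ Orb G, x ∈ C ∧ y ∈ C ∧ C ⊆ J ∧ C ≠ J

theorem Rel.symm' {J : Set ℝ} {x y : ℝ} (h : Rel G J x y) : Rel G J y x := by
  rcases h with h | ⟨C, hC, hx, hy, h⟩
  · exact Or.inl h.symm
  · exact Or.inr ⟨C, hC, hy, hx, h⟩

theorem Rel.trans' (hN : ¬ AdmitsBadOverlap G) {J : Set ℝ} {x y z : ℝ} (h : Rel G J x y)
    (h' : Rel G J y z) : Rel G J x z := by
  rcases h with rfl | ⟨C, hC, hx, hy, h⟩
  · exact h'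
  rcases h' with rfl | ⟨D, hD, hy', hz, h'⟩
  · exact Or.inr ⟨C, hC, hx, hy, h⟩
  rcases orb_nested hN hC hD ⟨y, hy, hy'⟩ with hs | hs
  · exact Or.inr ⟨D, hD, hs hx, hz, h'⟩
  · exact Or.inr ⟨C, hC, hx, hs hz, h⟩

theorem ap_injective (g : PermR) : Function.Injective (ap g) := fun _ _ h => ap_inj g h

theorem Rel.image (hPL : ∀ g ∈ G, IsPL g) {J : Set ℝ} {x y : ℝ} (h : Rel G J x y) {g : PermR}
    (hg : g ∈ G) : Rel G (ap g '' J) (ap g x) (ap g y) := by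
  rcases h with rfl | ⟨C, hC, hx, hy, h1, h2⟩
  · exact Or.inl rfl
  · refine Or.inr ⟨ap g '' C, orb_image hPL hC hg, mem_image_of_mem _ hx, mem_image_of_mem _ hy,
      image_mono h1, fun he => h2 ((ap_injective g).image_injective he)⟩

theorem image_inv_image (g : PermR) (J : Set ℝ) : ap g⁻¹ '' (ap g '' J) = J := by
  rw [image_image]
  simp [ap_inv_ap]

theorem image_image_inv (g : PermR) (J : Set ℝ) : ap g '' (ap g⁻¹ '' J) = J := by
  rw [image_image]
  simp [ap_ap_inv]

theorem Compat.image (hPL : ∀ g ∈ G, IsPL g) {J : Set ℝ} (h : Compat G J) {g : PermR}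
    (hg : g ∈ G) : Compat G (ap g '' J) := by
  rintro C hC ⟨y, hy, x, hx, rfl⟩
  have h1 := h _ (orb_image hPL hC (inv_mem hg)) ⟨x, ⟨ap g x, hy, ap_inv_ap g x⟩, hx⟩
  rw [← image_image_inv g C]
  exact h1.imp (fun h => image_mono h) (fun h => image_mono h)

theorem compat_orb (hN : ¬ AdmitsBadOverlap G) {A : Set ℝ} (hA : A ∈ Orb G) : Compat G A :=
  fun _ hC hne => orb_nested hN hC hA hne

/-- On each compatible set, `h` looks like an element of `G` modulo proper suborbitals. -/
def Approx (G : Subgroup PermR) (h : PermR) : Prop :=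
  ∀ J, Compat G J → ∃ g ∈ G, ap h '' J = ap g '' J ∧
    ∀ x ∈ J, Rel G (ap g '' J) (ap g x) (ap h x)

theorem Approx.mul (hPL : ∀ g ∈ G, IsPL g) (hN : ¬ AdmitsBadOverlap G) {h k : PermR}
    (hh : Approx G h) (hk : Approx G k) : Approx G (h * k) := by
  intro J hJ
  obtain ⟨g1, hg1, he1, hr1⟩ := hh J hJ
  obtain ⟨g2, hg2, he2, hr2⟩ := hk (ap g1 '' J) (hJ.image hPL hg1)
  have e : ∀ a b : PermR, ap (a * b) '' J = ap b '' (ap a '' J) := by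
    intro a b; rw [image_image]; rfl
  refine ⟨g1 * g2, mul_mem hg1 hg2, ?_, ?_⟩
  · rw [e, e, he1, he2]
  · intro x hx
    rw [e, ap_mul, ap_mul]
    refine Rel.trans' hN ((hr1 x hx).image hPL hg2) (hr2 _ ?_)
    rw [← he1]; exact mem_image_of_mem _ hx

theorem factor_mem {f k : PermR} (hk : StrictMono (ap k)) {a b : ℝ} (h : IsOneBumpFactor f k a b)
    {x : ℝ} (hx : x ∈ Ioo a b) : ap f x ∈ Ioo a b := by
  rw [h.2.1 x hx]
  have := mem_image_of_mem (ap k) hx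
  rwa [image_Ioo hk, h.1.left, h.1.right] at this

theorem factor_inv {f k : PermR} (hk : StrictMono (ap k)) {a b : ℝ}
    (h : IsOneBumpFactor f k a b) : IsOneBumpFactor f⁻¹ k⁻¹ a b := by
  refine ⟨⟨h.1.1, ?_, ?_, ?_⟩, ?_, ?_⟩
  · intro x hx he
    have := congrArg (ap k) he
    rw [ap_ap_inv] at this
    exact h.1.moved hx this.symm
  · exact not_supp.2 (ap_inv_fix k h.1.left)
  · exact not_supp.2 (ap_inv_fix k h.1.right)
  · intro x hx
    have hx' : ap k⁻¹ x ∈ Ioo a b := by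
      have := mem_image_of_mem (ap k⁻¹) hx
      rwa [image_Ioo (mono_inv hk), ap_inv_fix k h.1.left, ap_inv_fix k h.1.right] at this
    apply ap_inj f
    rw [ap_ap_inv, h.2.1 _ hx', ap_ap_inv]
  · intro x hx
    exact ap_inv_fix f (h.2.2 x hx)

theorem Approx.factor (hPL : ∀ g ∈ G, IsPL g) {f k : PermR} (hk : k ∈ G) {a b : ℝ}
    (h : IsOneBumpFactor f k a b) : Approx G f := by
  intro J hJ
  by_cases hne : (Ioo a b ∩ J).Nonempty
  · by_cases hsub : J ⊆ Ioo a b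
    · have e : ∀ x ∈ J, ap f x = ap k x := fun x hx => h.2.1 x (hsub hx)
      exact ⟨k, hk, image_congr e, fun x hx => Or.inl (e x hx).symm⟩
    · have hA : Ioo a b ∈ Orb G := ⟨k, hk, a, b, h.1, rfl⟩
      have hAJ : Ioo a b ⊆ J := (hJ _ hA hne).resolve_right hsub
      have maps : ∀ {f k : PermR}, StrictMono (ap k) → IsOneBumpFactor f k a b →
          ∀ x ∈ J, ap f x ∈ J := by
        intro f k hk h x hx
        by_cases hxA : x ∈ Ioo a b
        · exact hAJ (factor_mem hk h hxA)
        · rw [h.2.2 x hxA]; exact hx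
      have hkm := (hPL k hk).1
      have e1 : ap 1 '' J = J := by ext x; simp [ap_one]
      refine ⟨1, one_mem _, ?_, ?_⟩
      · rw [e1]
        apply Subset.antisymm
        · rintro _ ⟨x, hx, rfl⟩; exact maps hkm h x hx
        · intro x hx
          exact ⟨ap f⁻¹ x, maps (mono_inv hkm) (factor_inv hkm h) x hx, ap_ap_inv f x⟩
      · intro x hx
        rw [e1, ap_one]
        by_cases hxA : x ∈ Ioo a b
        · exact Or.inr ⟨_, hA, hxA, factor_mem hkm h hxA, hAJ, fun he => hsub he.symm.subset⟩
        · exact Or.inl (h.2.2 x hxA).symm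
  · have e : ∀ x ∈ J, ap f x = ap 1 x := fun x hx => h.2.2 x (fun hxA => hne ⟨x, hxA, hx⟩)
    exact ⟨1, one_mem _, image_congr e, fun x hx => Or.inl (e x hx).symm⟩

theorem approx_split (hPL : ∀ g ∈ G, IsPL g) (hN : ¬ AdmitsBadOverlap G) {h : PermR}
    (hh : h ∈ SplitGroup G) : Approx G h := by
  have key : Approx G h ∧ Approx G h⁻¹ := by
    unfold SplitGroup at hh
    induction hh using Subgroup.closure_induction with
    | mem f hf =>
      obtain ⟨k, hk, a, b, hfac⟩ := hf
      exact ⟨Approx.factor hPL hk hfac,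
        Approx.factor hPL (inv_mem hk) (factor_inv (hPL k hk).1 hfac)⟩
    | one =>
      have : Approx G 1 := fun J _ => ⟨1, one_mem _, rfl, fun x _ => Or.inl rfl⟩
      exact ⟨this, by rwa [inv_one]⟩
    | mul x y _ _ hx hy =>
      rw [mul_inv_rev]
      exact ⟨hx.1.mul hPL hN hy.1, hy.2.mul hPL hN hx.2⟩
    | inv x _ hx =>
      rw [inv_inv]
      exact ⟨hx.2, hx.1⟩
  exact key.1

theorem factor_mono {f k : PermR} (hk : StrictMono (ap k)) {a b : ℝ}
    (h : IsOneBumpFactor f k a b) : StrictMono (ap f) := by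
  intro x y hxy
  by_cases hx : x ∈ Ioo a b
  · by_cases hy : y ∈ Ioo a b
    · rw [h.2.1 x hx, h.2.1 y hy]; exact hk hxy
    · have := factor_mem hk h hx
      rw [h.2.2 y hy]
      have hby : b ≤ y := by
        by_contra! hc
        exact hy ⟨hx.1.trans hxy, hc⟩
      linarith [this.2]
  · rw [h.2.2 x hx]
    by_cases hy : y ∈ Ioo a b
    · have := factor_mem hk h hy
      have hxa : x ≤ a := by
        by_contra! hc
        exact hx ⟨hc, hxy.trans hy.2⟩
      linarith [this.1]
    · rw [h.2.2 y hy]; exact hxy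

theorem split_mono (hPL : ∀ g ∈ G, IsPL g) {h : PermR} (hh : h ∈ SplitGroup G) :
    StrictMono (ap h) := by
  unfold SplitGroup at hh
  induction hh using Subgroup.closure_induction with
  | mem f hf =>
    obtain ⟨k, hk, a, b, hfac⟩ := hf
    exact factor_mono (hPL k hk).1 hfac
  | one => exact fun x y hxy => hxy
  | mul x y _ _ hx hy => exact fun _ _ huv => hy (hx huv)
  | inv x _ hx => exact mono_inv hx

theorem orbital_unique {h : PermR} {p q l e x : ℝ} (h1 : IsOrbital h p q) (h2 : IsOrbital h l e)
    (hx1 : x ∈ Ioo p q) (hx2 : x ∈ Ioo l e) : p = l ∧ q = e := by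
  constructor
  · apply le_antisymm
    · by_contra! hc; exact h2.moved ⟨hc, hx1.1.trans hx2.2⟩ h1.left
    · by_contra! hc; exact h1.moved ⟨hc, hx2.1.trans hx1.2⟩ h2.left
  · apply le_antisymm
    · by_contra! hc; exact h1.moved ⟨hx1.1.trans hx2.2, hc⟩ h2.right
    · by_contra! hc; exact h2.moved ⟨hx2.1.trans hx1.2, hc⟩ h1.right

theorem split_orbital (hPL : ∀ g ∈ G, IsPL g) (hN : ¬ AdmitsBadOverlap G) {h : PermR}
    (hh : h ∈ SplitGroup G) {p q : ℝ} (hpq : IsOrbital h p q) : ∃ g ∈ G, IsOrbital g p q := by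
  have happ := approx_split hPL hN hh
  obtain ⟨x, hx⟩ := exists_between hpq.1
  have hxm : ap h x ≠ x := hpq.moved hx
  set D : Set (Set ℝ) := {B | B ∈ Orb G ∧ x ∈ B ∧ ap h x ∈ B} with hD
  set J : Set ℝ := ⋂₀ D with hJ
  have hxJ : x ∈ J := fun B hB => hB.2.1
  have hJc : Compat G J := by
    rintro C hC ⟨y, hyC, hyJ⟩
    by_cases hex : ∃ B ∈ D, B ⊆ C
    · obtain ⟨B, hB, hBC⟩ := hex
      exact Or.inr fun z hz => hBC (hz B hB)
    · push Not at hex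
      refine Or.inl fun z hz B hB => ?_
      exact (orb_nested hN hC hB.1 ⟨y, hyC, hyJ B hB⟩).resolve_right (hex B hB) hz
  have hBh : ∀ B ∈ D, ap h '' B = B := by
    intro B hB
    obtain ⟨g, hg, he, -⟩ := happ B (compat_orb hN hB.1)
    rw [he]
    refine orb_image_eq hPL hN hB.1 hg ⟨ap h x, ?_, hB.2.2⟩
    rw [← he]; exact mem_image_of_mem _ hB.2.1
  have hJh : ap h '' J = J := by
    apply Subset.antisymm
    · rintro _ ⟨y, hy, rfl⟩ B hB
      rw [← hBh B hB]; exact mem_image_of_mem _ (hy B hB)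
    · intro y hy
      refine ⟨ap h⁻¹ y, fun B hB => ?_, ap_ap_inv h y⟩
      have := hy B hB
      rw [← hBh B hB] at this
      obtain ⟨z, hz, rfl⟩ := this
      rwa [ap_inv_ap]
  obtain ⟨g, hg, he, hr⟩ := happ J hJc
  have hJg : ap g '' J = J := by rw [← he, hJh]
  rw [hJg] at hr
  have hnr : ¬ Rel G J x (ap h x) := by
    rintro (h1 | ⟨C, hC, h1, h2, h3, h4⟩)
    · exact hxm h1.symm
    · exact h4 (Subset.antisymm h3 fun z hz => hz C ⟨hC, h1, h2⟩)
  have hgx : ap g x ≠ x := by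
    intro h1
    have := hr x hxJ
    rw [h1] at this
    exact hnr this
  obtain ⟨l, e, hle, hxle⟩ := exists_orbital (hPL g hg) hgx
  have hCO : Ioo l e ∈ Orb G := ⟨g, hg, l, e, hle, rfl⟩
  have hCg : ap g '' Ioo l e = Ioo l e := by
    rw [image_Ioo (hPL g hg).1, hle.left, hle.right]
  have hgxC : ap g x ∈ Ioo l e := by
    rw [← hCg]; exact mem_image_of_mem _ hxle
  have hhxC : ap h x ∈ Ioo l e := by
    rcases hr x hxJ with h1 | ⟨E, hE, h1, h2, h3, h4⟩
    · rwa [← h1]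
    · rcases orb_nested hN hE hCO ⟨_, h1, hgxC⟩ with hs | hs
      · exact hs h2
      · exact absurd (Or.inr ⟨E, hE, hs hxle, h2, h3, h4⟩) hnr
  have hCD : Ioo l e ∈ D := ⟨hCO, hxle, hhxC⟩
  have hJC : J = Ioo l e := by
    apply Subset.antisymm
    · exact fun z hz => hz _ hCD
    · intro z hz B hB
      have hgxB : ap g x ∈ B := by
        have : ap g x ∈ J := by rw [← hJg]; exact mem_image_of_mem _ hxJ
        exact this B hB
      rcases orb_nested hN hB.1 hCO ⟨x, hB.2.1, hxle⟩ with hs | hs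
      · by_cases heq : B = Ioo l e
        · rwa [heq]
        · exact absurd ⟨ap g x, mem_image_of_mem _ hB.2.1, hgxB⟩
            (orb_displaced hPL hN hB.1 hg hle hs heq)
      · exact hs hz
  have hends : ap h l = l ∧ ap h e = e := by
    have := hJh
    rw [hJC, image_Ioo (split_mono hPL hh)] at this
    exact Ioo_inj (split_mono hPL hh hle.1) this
  have horb : IsOrbital h l e := by
    refine ⟨hle.1, ?_, not_supp.2 hends.1, not_supp.2 hends.2⟩
    intro y hy hfix
    have h1 := hr y (by rw [hJC]; exact hy)
    rw [hfix] at h1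
    rcases h1 with h1 | ⟨E, hE, h1, h2, h3, h4⟩
    · exact hle.moved hy h1
    · rw [hJC] at h3 h4
      exact orb_displaced hPL hN hE hg hle h3 h4 ⟨ap g y, mem_image_of_mem _ h2, h1⟩
  obtain ⟨e1, e2⟩ := orbital_unique hpq horb hx hxle
  subst e1 e2
  exact ⟨g, hg, hle⟩

end split

/-! ### A bad overlap obstructs solubility -/

/-- `L` acts on `(α, δ)` by increasing maps without global fixed points. -/
def GoodAct (L : Subgroup PermR) (α δ : ℝ) : Prop :=
  (∀ g ∈ L, StrictMono (ap g) ∧ ap g α = α ∧ ap g δ = δ) ∧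
    ∀ x ∈ Ioo α δ, ∃ g ∈ L, ap g x ≠ x

theorem GoodAct.mem {L : Subgroup PermR} {α δ : ℝ} (h : GoodAct L α δ) {g : PermR} (hg : g ∈ L)
    {x : ℝ} (hx : x ∈ Ioo α δ) : ap g x ∈ Ioo α δ := by
  obtain ⟨h1, h2, h3⟩ := h.1 g hg
  refine ⟨?_, ?_⟩
  · have := h1 hx.1; rwa [h2] at this
  · have := h1 hx.2; rwa [h3] at this

theorem GoodAct.low {L : Subgroup PermR} {α δ : ℝ} (h : GoodAct L α δ)
    {x : ℝ} (hx : x ∈ Ioo α δ) {e : ℝ} (he : α < e) : ∃ k ∈ L, ap k x < e := by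
  by_contra! hc
  set Z : Set ℝ := {y | ∃ k ∈ L, ap k x = y} with hZ
  have hbd : BddBelow Z := ⟨e, by rintro y ⟨k, hk, rfl⟩; exact hc k hk⟩
  have hne : Z.Nonempty := ⟨x, 1, one_mem _, rfl⟩
  have hm1 : e ≤ sInf Z := le_csInf hne (by rintro y ⟨k, hk, rfl⟩; exact hc k hk)
  have hm2 : sInf Z ≤ x := csInf_le hbd ⟨1, one_mem _, rfl⟩
  obtain ⟨g, hg, hgm⟩ := h.2 (sInf Z) ⟨by linarith, by linarith [hx.2]⟩
  have key : ∀ g ∈ L, ap g (sInf Z) < sInf Z → False := by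
    intro g hg hlt
    have h1 := mono_inv (h.1 g hg).1 hlt
    rw [ap_inv_ap] at h1
    obtain ⟨y, ⟨k, hk, rfl⟩, hy⟩ := exists_lt_of_csInf_lt hne h1
    have h2 := (h.1 g hg).1 hy
    rw [ap_ap_inv] at h2
    exact absurd (csInf_le hbd ⟨k * g, mul_mem hk hg, rfl⟩) (not_le.mpr h2)
  rcases lt_or_gt_of_ne hgm with h1 | h1
  · exact key g hg h1
  · have h2 := mono_inv (h.1 g hg).1 h1
    rw [ap_inv_ap] at h2
    exact key g⁻¹ (inv_mem hg) h2

theorem GoodAct.high {L : Subgroup PermR} {α δ : ℝ} (h : GoodAct L α δ)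
    {x : ℝ} (hx : x ∈ Ioo α δ) {e : ℝ} (he : e < δ) : ∃ k ∈ L, e < ap k x := by
  by_contra! hc
  set Z : Set ℝ := {y | ∃ k ∈ L, ap k x = y} with hZ
  have hbd : BddAbove Z := ⟨e, by rintro y ⟨k, hk, rfl⟩; exact hc k hk⟩
  have hne : Z.Nonempty := ⟨x, 1, one_mem _, rfl⟩
  have hm1 : sSup Z ≤ e := csSup_le hne (by rintro y ⟨k, hk, rfl⟩; exact hc k hk)
  have hm2 : x ≤ sSup Z := le_csSup hbd ⟨1, one_mem _, rfl⟩
  obtain ⟨g, hg, hgm⟩ := h.2 (sSup Z) ⟨by linarith [hx.1], by linarith⟩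
  have key : ∀ g ∈ L, sSup Z < ap g (sSup Z) → False := by
    intro g hg hlt
    have h1 := mono_inv (h.1 g hg).1 hlt
    rw [ap_inv_ap] at h1
    obtain ⟨y, ⟨k, hk, rfl⟩, hy⟩ := exists_lt_of_lt_csSup hne h1
    have h2 := (h.1 g hg).1 hy
    rw [ap_ap_inv] at h2
    exact absurd (le_csSup hbd ⟨k * g, mul_mem hk hg, rfl⟩) (not_le.mpr h2)
  rcases lt_or_gt_of_ne hgm with h1 | h1
  · have h2 := mono_inv (h.1 g hg).1 h1
    rw [ap_inv_ap] at h2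
    exact key g⁻¹ (inv_mem hg) h2
  · exact key g hg h1

/-- Elements with trivial right germ at `α`. -/
def germTriv (α : ℝ) : Subgroup PermR where
  carrier := {g | ∃ e > α, ∀ y ∈ Ioo α e, ap g y = y}
  one_mem' := ⟨α + 1, by linarith, fun y _ => rfl⟩
  mul_mem' := by
    rintro g h ⟨e, he, hg⟩ ⟨e', he', hh⟩
    refine ⟨min e e', lt_min he he', fun y hy => ?_⟩
    have h1 := hg y ⟨hy.1, hy.2.trans_le (min_le_left _ _)⟩
    have h2 := hh y ⟨hy.1, hy.2.trans_le (min_le_right _ _)⟩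
    rw [ap_mul, h1, h2]
  inv_mem' := by
    rintro g ⟨e, he, hg⟩
    exact ⟨e, he, fun y hy => ap_inv_fix g (hg y hy)⟩

theorem comm_fix {L : Subgroup PermR} {x : ℝ} (hx : ∀ c ∈ ⁅L, L⁆, ap c x = x) {k h : PermR}
    (hk : k ∈ L) (hh : h ∈ L) : ap h (ap k x) = ap k (ap h x) := by
  have h1 := hx _ (Subgroup.commutator_mem_commutator hk hh)
  rw [commutatorElement_def, ap_mul, ap_mul, ap_mul] at h1
  have h2 := congrArg (ap k) (congrArg (ap h) h1)
  rwa [ap_ap_inv, ap_ap_inv] at h2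

theorem commutator_le_self' (L : Subgroup PermR) : ⁅L, L⁆ ≤ L := by
  rw [Subgroup.commutator_le]
  intro g hg h hh
  exact mul_mem (mul_mem (mul_mem hg hh) (inv_mem hg)) (inv_mem hh)

theorem GoodAct.derived {L : Subgroup PermR} {α δ : ℝ} (h : GoodAct L α δ)
    (hL : L ≤ germTriv α) : GoodAct ⁅L, L⁆ α δ := by
  refine ⟨fun g hg => h.1 g (commutator_le_self' L hg), ?_⟩
  intro x hx
  by_contra! hc
  obtain ⟨g, hg, hgx⟩ := h.2 x hx
  obtain ⟨e, he, hge⟩ := hL hg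
  obtain ⟨k, hk, hkx⟩ := h.low hx he
  have h1 := hge _ ⟨(h.mem hk hx).1, hkx⟩
  rw [comm_fix hc hk hg] at h1
  exact hgx (ap_inj k h1)

theorem not_solvable_of_good {K : Subgroup PermR} {α δ : ℝ} (hαδ : α < δ)
    (h : GoodAct ⁅K, K⁆ α δ) (hK : ⁅K, K⁆ ≤ germTriv α) : ¬ Group.IsSolvable ↥K := by
  rintro ⟨n, hn⟩
  have key : ∀ n, GoodAct ((derivedSeries ↥K (n+1)).map K.subtype) α δ ∧
      (derivedSeries ↥K (n+1)).map K.subtype ≤ germTriv α := by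
    intro n
    induction n with
    | zero =>
      rw [derivedSeries_succ, derivedSeries_zero, Subgroup.map_commutator,
        ← MonoidHom.range_eq_map, Subgroup.range_subtype]
      exact ⟨h, hK⟩
    | succ n ih =>
      rw [derivedSeries_succ, Subgroup.map_commutator]
      exact ⟨ih.1.derived ih.2, (commutator_le_self' _).trans ih.2⟩
  have h1 : derivedSeries ↥K (n+1) = ⊥ := by
    rw [eq_bot_iff, ← hn]; exact derivedSeries_antitone _ (Nat.le_succ n)
  obtain ⟨x, hx⟩ := exists_between hαδ
  obtain ⟨g, hg, hgx⟩ := (key n).1.2 x hx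
  rw [h1, Subgroup.map_bot, Subgroup.mem_bot] at hg
  subst hg
  exact hgx rfl

/-- A PL map fixing `α ∈ [0,1)` is affine on a right neighbourhood of `α`. -/
theorem IsPL.germ {g : PermR} (hg : IsPL g) {α : ℝ} (h0 : 0 ≤ α) (h1 : α < 1)
    (hα : ap g α = α) : ∃ m > 0, ∃ e > α, ∀ y ∈ Ioo α e, ap g y = α + m * (y - α) := by
  obtain ⟨e, he, hbr⟩ : ∃ e > α, e ≤ 1 ∧ ∀ y ∈ Ioo α e, y ∉ Breakpoints g := by
    have hcl : IsClosed (Breakpoints g \ {α}) := (hg.2.2.subset sdiff_subset).isClosed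
    have : (Breakpoints g \ {α})ᶜ ∈ nhds α := hcl.isOpen_compl.mem_nhds (by simp)
    obtain ⟨r, hr, hball⟩ := Metric.mem_nhds_iff.1 this
    refine ⟨min 1 (α + r), lt_min h1 (by linarith), min_le_left _ _, fun y hy hyb => ?_⟩
    have hy2 := hy.2.trans_le (min_le_right _ _)
    have : y ∈ Metric.ball α r := by
      rw [Metric.mem_ball, Real.dist_eq, abs_lt]; constructor <;> linarith [hy.1]
    exact hball this ⟨hyb, fun h => (ne_of_gt hy.1) h⟩
  have hloc : ∀ y ∈ Ioo α e, ∃ m b : ℝ, ∀ᶠ z in nhds y, ap g z = m * z + b := by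
    intro y hy
    by_contra hc
    exact hbr.2 y hy ⟨⟨by linarith [hy.1], by linarith [hy.2, hbr.1]⟩, hc⟩
  have hd : ∀ y ∈ Ioo α e, ∃ m, ∀ᶠ z in nhds y, HasDerivAt (ap g) m z := by
    intro y hy
    obtain ⟨m, b, hmb⟩ := hloc y hy
    refine ⟨m, ?_⟩
    filter_upwards [hmb.eventually_nhds] with z hz
    have : HasDerivAt (fun z : ℝ => m * z + b) m z := by
      simpa using ((hasDerivAt_id z).const_mul m).add_const b
    exact this.congr_of_eventuallyEq hz
  have hdd : ∀ y ∈ Ioo α e, HasDerivAt (deriv (ap g)) 0 y := by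
    intro y hy
    obtain ⟨m, hm⟩ := hd y hy
    refine (hasDerivAt_const y m).congr_of_eventuallyEq ?_
    filter_upwards [hm] with z hz
    exact hz.deriv
  obtain ⟨m, hm⟩ := isOpen_Ioo.exists_is_const_of_deriv_eq_zero isPreconnected_Ioo
    (fun y hy => (hdd y hy).differentiableAt.differentiableWithinAt)
    (fun y hy => (hdd y hy).deriv)
  have hd2 : ∀ y ∈ Ioo α e, HasDerivAt (fun z => ap g z - m * z) 0 y := by
    intro y hy
    obtain ⟨m', hm'⟩ := hd y hy
    have h2 := hm'.self_of_nhds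
    have h3 := hm y hy
    rw [h2.deriv] at h3
    subst h3
    have h4 : HasDerivAt (fun z : ℝ => m' * z) m' y := by
      simpa using (hasDerivAt_id y).const_mul m'
    have h5 := h2.sub h4
    rw [sub_self] at h5
    exact h5
  obtain ⟨b, hb⟩ := isOpen_Ioo.exists_is_const_of_deriv_eq_zero isPreconnected_Ioo
    (fun y hy => (hd2 y hy).differentiableAt.differentiableWithinAt)
    (fun y hy => (hd2 y hy).deriv)
  have hbα : α - m * α = b := by
    have hc : Continuous (fun z => ap g z - m * z) :=
      (cont_of_mono hg.1).sub (continuous_const.mul continuous_id)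
    have hcl : IsClosed {z | ap g z - m * z = b} := isClosed_eq hc continuous_const
    have hsub : closure (Ioo α e) ⊆ {z | ap g z - m * z = b} := closure_minimal hb hcl
    rw [closure_Ioo (ne_of_lt he)] at hsub
    have := hsub (left_mem_Icc.2 he.le)
    simpa [hα] using this
  have hform : ∀ y ∈ Ioo α e, ap g y = α + m * (y - α) := by
    intro y hy
    have := hb y hy

    linarith
  refine ⟨m, ?_, e, he, hform⟩
  obtain ⟨y, hy⟩ := exists_between he
  have h2 := hg.1 hy.1
  rw [hα, hform y hy] at h2
  have h3 : 0 < m * (y - α) := by linarith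
  exact pos_of_mul_pos_left h3 (by linarith [hy.1])

theorem germ_comm {K : Subgroup PermR} (hK : ∀ g ∈ K, IsPL g) {α : ℝ} (h0 : 0 ≤ α) (h1 : α < 1)
    (hα : ∀ g ∈ K, ap g α = α) : ⁅K, K⁆ ≤ germTriv α := by
  rw [Subgroup.commutator_le]
  intro g hg h hh
  obtain ⟨m, hm, e, he, hge⟩ := (hK g hg).germ h0 h1 (hα g hg)
  obtain ⟨n, hn, e', he', hhe⟩ := (hK h hh).germ h0 h1 (hα h hh)
  have A : 0 < (e' - α) / m := div_pos (by linarith) hm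
  have B : 0 < (e - α) / n := div_pos (by linarith) hn
  refine ⟨min (min e e') (α + min ((e' - α) / m) ((e - α) / n)),
    lt_min (lt_min he he') (by linarith [lt_min A B]), fun y hy => ?_⟩
  have hy1 : y < e := hy.2.trans_le ((min_le_left _ _).trans (min_le_left _ _))
  have hy2 : y < e' := hy.2.trans_le ((min_le_left _ _).trans (min_le_right _ _))
  have hy3 : y - α < (e' - α) / m := by
    have := hy.2.trans_le (min_le_right _ _)
    linarith [min_le_left ((e' - α) / m) ((e - α) / n)]
  have hy4 : y - α < (e - α) / n := by
    have := hy.2.trans_le (min_le_right _ _)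
    linarith [min_le_right ((e' - α) / m) ((e - α) / n)]
  rw [lt_div_iff₀ hm] at hy3
  rw [lt_div_iff₀ hn] at hy4
  have hpos : 0 < y - α := by linarith [hy.1]
  have key : ap h (ap g y) = ap g (ap h y) := by
    rw [hge y ⟨hy.1, hy1⟩, hhe y ⟨hy.1, hy2⟩,
      hhe _ ⟨by linarith [mul_pos hm hpos], by linarith⟩,
      hge _ ⟨by linarith [mul_pos hn hpos], by linarith⟩]
    ring
  rw [commutatorElement_def, ap_mul, ap_mul, ap_mul, key, ap_inv_ap, ap_inv_ap]

theorem exists_fix_in {T : Set ℝ} (hT : IsClosed T) {g : PermR} (hg : StrictMono (ap g))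
    (h1 : ∀ x ∈ T, ap g x ∈ T) (h2 : ∀ x ∈ T, ap g⁻¹ x ∈ T) {α δ x z : ℝ} (hx : x ∈ Ioo α δ)
    (hxT : x ∈ T) (hz : z ∈ Ioo α δ) (hgz : ap g z = z) :
    ∃ s ∈ T, s ∈ Ioo α δ ∧ ap g s = s := by
  have hgz' := ap_inv_fix g hgz
  rcases le_total x z with hxz | hxz
  · have hne : (T ∩ Iic z).Nonempty := ⟨x, hxT, hxz⟩
    have hbd : BddAbove (T ∩ Iic z) := ⟨z, fun y hy => hy.2⟩
    have hm := (hT.inter isClosed_Iic).csSup_mem hne hbd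
    have hxs := le_csSup hbd ⟨hxT, hxz⟩
    set s := sSup (T ∩ Iic z)
    have hsz : s ≤ z := hm.2
    refine ⟨s, hm.1, ⟨by linarith [hx.1], by linarith [hz.2]⟩, le_antisymm ?_ ?_⟩
    · refine le_csSup hbd ⟨h1 s hm.1, ?_⟩
      have := hg.monotone hsz; rwa [hgz] at this
    · have h3 : ap g⁻¹ s ≤ s := by
        refine le_csSup hbd ⟨h2 s hm.1, ?_⟩
        have := (mono_inv hg).monotone hsz; rwa [hgz'] at this
      have := hg.monotone h3
      rwa [ap_ap_inv] at this
  · have hne : (T ∩ Ici z).Nonempty := ⟨x, hxT, hxz⟩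
    have hbd : BddBelow (T ∩ Ici z) := ⟨z, fun y hy => hy.2⟩
    have hm := (hT.inter isClosed_Ici).csInf_mem hne hbd
    have hxs := csInf_le hbd ⟨hxT, hxz⟩
    set s := sInf (T ∩ Ici z)
    have hsz : z ≤ s := hm.2
    refine ⟨s, hm.1, ⟨by linarith [hz.1], by linarith [hx.2]⟩, le_antisymm ?_ ?_⟩
    · have h3 : s ≤ ap g⁻¹ s := by
        refine csInf_le hbd ⟨h2 s hm.1, ?_⟩
        have := (mono_inv hg).monotone hsz; rwa [hgz'] at this
      have := hg.monotone h3
      rwa [ap_ap_inv] at this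
    · refine csInf_le hbd ⟨h1 s hm.1, ?_⟩
      have := hg.monotone hsz; rwa [hgz] at this

/-- Common setup: two elements without common fixed point in `[u,v]`. -/
theorem not_solvable_core {G : Subgroup PermR} (hPL : ∀ g ∈ G, IsPL g) {f g : PermR}
    (hf : f ∈ G) (hg : g ∈ G) {u v : ℝ} (huv : u ≤ v)
    (hn : ∀ x ∈ Icc u v, ap f x = x → ap g x = x → False) (hgu : ap g u = u)
    (hcase : ap f v = v ∨ (∃ a < u, ap f a = a ∧ IsOrbital g a u) ∨
      (∃ b > u, ap f b = b ∧ IsOrbital g u b)) : ¬ Group.IsSolvable ↥G := by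
  intro (hsol : Group.IsSolvable ↥G)
  set K : Subgroup PermR := Subgroup.closure {f, g} with hKdef
  have hKG : K ≤ G := by
    rw [hKdef, Subgroup.closure_le]
    rintro k (rfl | rfl) <;> assumption
  have hfK : f ∈ K := Subgroup.subset_closure (by simp)
  have hgK : g ∈ K := Subgroup.subset_closure (by simp)
  have hPLK : ∀ k ∈ K, IsPL k := fun k hk => hPL k (hKG hk)
  have hKsol : Group.IsSolvable ↥K :=
    Group.isSolvable_of_isSolvable_injective (Subgroup.inclusion_injective hKG)
  have moved : ∀ x ∈ Icc u v, x ∈ Ioo (0:ℝ) 1 := by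
    intro x hx
    by_cases h : ap f x = x
    · exact (hPL g hg).mem_of_moved (fun h' => hn x hx h h')
    · exact (hPL f hf).mem_of_moved h
  have hu := moved u ⟨le_refl _, huv⟩
  have hv := moved v ⟨huv, le_refl _⟩
  obtain ⟨α, δ, hα0, hδ1, hαu, hvδ, hα, hδ, hno⟩ := exists_component
    ({x | ap f x = x} ∩ {x | ap g x = x})
    ((isClosed_fix (hPL f hf).1).inter (isClosed_fix (hPL g hg).1))
    ⟨(hPL f hf).fix0, (hPL g hg).fix0⟩ ⟨(hPL f hf).fix1, (hPL g hg).fix1⟩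
    hu.1.le hv.2.le huv (fun x hx hF => hn x hx hF.1 hF.2)
  have fixK : ∀ x, ap f x = x → ap g x = x → ∀ k ∈ K, ap k x = x := by
    intro x h1 h2 k hk
    induction hk using Subgroup.closure_induction with
    | mem k hk => rcases hk with rfl | rfl <;> assumption
    | one => rfl
    | mul a b _ _ ha hb => rw [ap_mul, ha, hb]
    | inv a _ ha => exact ap_inv_fix a ha
  have hgood : GoodAct K α δ := by
    refine ⟨fun k hk => ⟨(hPLK k hk).1, fixK α hα.1 hα.2 k hk, fixK δ hδ.1 hδ.2 k hk⟩, ?_⟩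
    intro x hx
    by_contra! hc
    exact hno x hx ⟨hc f hfK, hc g hgK⟩
  have hgerm : ⁅K, K⁆ ≤ germTriv α :=
    germ_comm hPLK hα0 (by linarith [hu.2]) (fixK α hα.1 hα.2)
  refine not_solvable_of_good (by linarith) ⟨fun k hk => hgood.1 k (commutator_le_self' K hk), ?_⟩
    hgerm hKsol
  intro x hx
  by_contra! hc
  -- the fixed set of the derived subgroup
  set T1 : Set ℝ := {y | ∀ c ∈ ⁅K, K⁆, ap c y = y} with hT1
  have T1closed : IsClosed T1 := by
    have : T1 = ⋂ c ∈ ⁅K, K⁆, {y | ap c y = y} := by ext y; simp [hT1]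
    rw [this]
    exact isClosed_biInter fun c hc' => isClosed_fix (hPLK c (commutator_le_self' K hc')).1
  have T1inv : ∀ k ∈ K, ∀ y ∈ T1, ap k y ∈ T1 := by
    intro k hk y hy c hc'
    have hcK := commutator_le_self' K hc'
    rw [comm_fix hy hk hcK, hy c hc']
  obtain ⟨s, hsT, hs, hgs⟩ := exists_fix_in T1closed (hPL g hg).1 (T1inv g hgK)
    (T1inv g⁻¹ (inv_mem hgK)) hx hc (z := u) ⟨hαu, by linarith⟩ hgu
  set T2 : Set ℝ := T1 ∩ {y | ap g y = y} with hT2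
  have T2closed : IsClosed T2 := T1closed.inter (isClosed_fix (hPL g hg).1)
  have T2inv : ∀ k ∈ K, ∀ y ∈ T2, ap k y ∈ T2 := by
    rintro k hk y ⟨hy, hy2⟩
    refine ⟨T1inv k hk y hy, ?_⟩
    have hy3 : ap g y = y := hy2
    change ap g (ap k y) = ap k y
    rw [comm_fix hy hk hgK, hy3]
  rcases hcase with h | ⟨a, hau, hfa, hga⟩ | ⟨b, hbu, hfb, hgb⟩
  · obtain ⟨t, htT, ht, hft⟩ := exists_fix_in T2closed (hPL f hf).1 (T2inv f hfK)
      (T2inv f⁻¹ (inv_mem hfK)) hs ⟨hsT, hgs⟩ (z := v) ⟨by linarith, hvδ⟩ h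
    exact hno t ht ⟨hft, htT.2⟩
  · have haα : a ≤ α := by
      by_contra! hlt
      exact hno a ⟨hlt, by linarith⟩ ⟨hfa, hga.left⟩
    obtain ⟨k, hk, hks⟩ := hgood.low hs hαu
    exact hga.moved ⟨lt_of_le_of_lt haα (hgood.mem hk hs).1, hks⟩ (T2inv k hk s ⟨hsT, hgs⟩).2
  · have hbδ : δ ≤ b := by
      by_contra! hlt
      exact hno b ⟨by linarith, hlt⟩ ⟨hfb, hgb.right⟩
    obtain ⟨k, hk, hks⟩ := hgood.high hs (e := u) (by linarith)
    exact hgb.moved ⟨hks, lt_of_lt_of_le (hgood.mem hk hs).2 hbδ⟩ (T2inv k hk s ⟨hsT, hgs⟩).2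

theorem not_solvable_of_trans {G : Subgroup PermR} (hPL : ∀ g ∈ G, IsPL g) {f g : PermR}
    (hf : f ∈ G) (hg : g ∈ G) {a b c d : ℝ} (h1 : IsOrbital f a b) (h2 : IsOrbital g c d)
    (hac : a < c) (hcb : c < b) (hbd : b < d) : ¬ Group.IsSolvable ↥G := by
  refine not_solvable_core hPL hf hg hcb.le ?_ h2.left (Or.inl h1.right)
  intro x hx hfx hgx
  rcases eq_or_lt_of_le hx.1 with h | h
  · subst h; exact h1.moved ⟨hac, hcb⟩ hfx
  · exact h2.moved ⟨h, by linarith [hx.2]⟩ hgx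

theorem not_solvable_of_left {G : Subgroup PermR} (hPL : ∀ g ∈ G, IsPL g) {f g : PermR}
    (hf : f ∈ G) (hg : g ∈ G) {a b c : ℝ} (h1 : IsOrbital f a b) (h2 : IsOrbital g a c)
    (hcb : c < b) : ¬ Group.IsSolvable ↥G := by
  refine not_solvable_core hPL hf hg (le_refl c) ?_ h2.right
    (Or.inr (Or.inl ⟨a, h2.1, h1.left, h2⟩))
  intro x hx hfx _
  have := le_antisymm hx.2 hx.1
  subst this
  exact h1.moved ⟨h2.1, hcb⟩ hfx

theorem not_solvable_of_right {G : Subgroup PermR} (hPL : ∀ g ∈ G, IsPL g) {f g : PermR}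
    (hf : f ∈ G) (hg : g ∈ G) {a b c : ℝ} (h1 : IsOrbital f a b) (h2 : IsOrbital g c b)
    (hac : a < c) : ¬ Group.IsSolvable ↥G := by
  refine not_solvable_core hPL hf hg (le_refl c) ?_ h2.left
    (Or.inr (Or.inr ⟨b, h2.1, h1.right, h2⟩))
  intro x hx hfx _
  have := le_antisymm hx.2 hx.1
  subst this
  exact h1.moved ⟨hac, h2.1⟩ hfx

theorem not_solvable_of_bad {G : Subgroup PermR} (hPL : ∀ g ∈ G, IsPL g)
    (hbad : AdmitsBadOverlap G) : ¬ Group.IsSolvable ↥G := by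
  obtain ⟨f, hf, g, hg, a, b, c, d, h1, h2, ⟨x, hx1, hx2⟩, hne, h3, h4⟩ := hbad
  have hcb : c < b := hx2.1.trans hx1.2
  have had : a < d := hx1.1.trans hx2.2
  have h3' : a ≤ c ∨ d ≤ b := by
    by_contra! hc
    exact h3 fun y hy => ⟨by linarith [hy.1], by linarith [hy.2]⟩
  have h4' : c ≤ a ∨ b ≤ d := by
    by_contra! hc
    exact h4 fun y hy => ⟨by linarith [hy.1], by linarith [hy.2]⟩
  rcases lt_trichotomy a c with hac | hac | hac
  · rcases lt_trichotomy b d with hbd | hbd | hbd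
    · exact not_solvable_of_trans hPL hf hg h1 h2 hac hcb hbd
    · subst hbd; exact not_solvable_of_right hPL hf hg h1 h2 hac
    · rcases h4' with h | h <;> linarith
  · subst hac
    rcases lt_trichotomy b d with hbd | hbd | hbd
    · exact not_solvable_of_left hPL hg hf h2 h1 hbd
    · subst hbd; exact absurd rfl hne
    · exact not_solvable_of_left hPL hf hg h1 h2 hbd
  · rcases lt_trichotomy b d with hbd | hbd | hbd
    · rcases h3' with h | h <;> linarith
    · subst hbd; exact not_solvable_of_right hPL hg hf h2 h1 hac
    · exact not_solvable_of_trans hPL hg hf h2 h1 hac had hbd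

theorem statement13 (G H : Subgroup PermR) (hPL : ∀ g ∈ G, IsPL g)
    (hGH : G ≤ H) (hHS : H ≤ SplitGroup G) (hbad : AdmitsBadOverlap H) :
    AdmitsBadOverlap G ∧ ¬ IsSolvable ↥G := by
  have hG : AdmitsBadOverlap G := by
    by_contra hN
    obtain ⟨f, hf, g, hg, a, b, c, d, h1, h2, hrest⟩ := hbad
    obtain ⟨f', hf', h1'⟩ := split_orbital hPL hN (hHS hf) h1
    obtain ⟨g', hg', h2'⟩ := split_orbital hPL hN (hHS hg) h2
    exact hN ⟨f', hf', g', hg', a, b, c, d, h1', h2', hrest⟩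
  exact ⟨hG, not_solvable_of_bad hPL hG⟩

end PLPaper
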